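/- Suppose there exist μ > 0 and a function η that is C² in Ω, continuous on the closure of Ω, positive in Ω, vanishes on ∂Ω, and satisfies the adjoint eigenvalue equation −Δη(x) − div(u(x) η(x)) = μ η(x) for all x ∈ Ω. Then for every λ > μ / g'(0) the explosion problem at parameter λ admits no nonnegative classical solution. -/

import Mathlib

open Set MeasureTheory
open scoped RealInnerProductSpace

noncomputable section

/-- The Laplacian of a real-valued function on Euclidean space, computed as the sum of
the second partial derivatives in the coordinate directions. -/
def lapl {n : ℕ} (φ : EuclideanSpace ℝ (Fin n) → ℝ) (x : EuclideanSpace ℝ (Fin n)) : ℝ :=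
  ∑ i : Fin n, fderiv ℝ (fun y => fderiv ℝ φ y (EuclideanSpace.single i 1)) x
    (EuclideanSpace.single i 1)

/-- The divergence of a vector field on Euclidean space. -/
def dvg {n : ℕ} (u : EuclideanSpace ℝ (Fin n) → EuclideanSpace ℝ (Fin n))
    (x : EuclideanSpace ℝ (Fin n)) : ℝ :=
  ∑ i : Fin n, fderiv ℝ (fun y => u y i) x (EuclideanSpace.single i 1)

/-- A classical solution of the explosion problem `-Δφ + ⟨u, ∇φ⟩ = λ g(φ)` in `Ω`,
vanishing on `∂Ω`: `C²` in `Ω`, continuous on the closure of `Ω`. -/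
def IsClassicalSol {n : ℕ} (Ω : Set (EuclideanSpace ℝ (Fin n)))
    (u : EuclideanSpace ℝ (Fin n) → EuclideanSpace ℝ (Fin n)) (g : ℝ → ℝ) (lam : ℝ)
    (φ : EuclideanSpace ℝ (Fin n) → ℝ) : Prop :=
  (∀ x ∈ Ω, ContDiffAt ℝ 2 φ x) ∧ ContinuousOn φ (closure Ω) ∧
  (∀ x ∈ Ω, -lapl φ x + ⟪u x, gradient φ x⟫ = lam * g (φ x)) ∧
  (∀ x ∈ frontier Ω, φ x = 0)

/-- A nonnegative classical solution. -/
def IsNonnegSol {n : ℕ} (Ω : Set (EuclideanSpace ℝ (Fin n)))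
    (u : EuclideanSpace ℝ (Fin n) → EuclideanSpace ℝ (Fin n)) (g : ℝ → ℝ) (lam : ℝ)
    (φ : EuclideanSpace ℝ (Fin n) → ℝ) : Prop :=
  IsClassicalSol Ω u g lam φ ∧ ∀ x ∈ Ω, 0 ≤ φ x

/-- A minimal nonnegative classical solution: one that lies below every nonnegative
classical solution at the same parameter. -/
def IsMinimalSol {n : ℕ} (Ω : Set (EuclideanSpace ℝ (Fin n)))
    (u : EuclideanSpace ℝ (Fin n) → EuclideanSpace ℝ (Fin n)) (g : ℝ → ℝ) (lam : ℝ)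
    (φ : EuclideanSpace ℝ (Fin n) → ℝ) : Prop :=
  IsNonnegSol Ω u g lam φ ∧ ∀ v, IsNonnegSol Ω u g lam v → ∀ x ∈ Ω, φ x ≤ v x

open Filter Topology

theorem aux_ibp {n : ℕ} (Ω K : Set (EuclideanSpace ℝ (Fin n))) (hΩ : IsOpen Ω)
    (hK : IsCompact K) (hKΩ : K ⊆ Ω) (F : EuclideanSpace ℝ (Fin n) → ℝ)
    (hF : ∀ x ∈ Ω, ContDiffAt ℝ 1 F x) (h0 : ∀ x ∈ Ω, x ∉ K → F x = 0)
    (v : EuclideanSpace ℝ (Fin n)) :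
    IntegrableOn (fun x => fderiv ℝ F x v) Ω ∧ ∫ x in Ω, fderiv ℝ F x v = 0 := by
  have hG : ContDiff ℝ 1 (Ω.indicator F) := by
    rw [contDiff_iff_contDiffAt]
    intro x
    by_cases hx : x ∈ K
    · have hx' := hKΩ hx
      refine (hF x hx').congr_of_eventuallyEq ?_
      filter_upwards [hΩ.mem_nhds hx'] with y hy
      simp [hy]
    · refine (contDiffAt_const (c := (0:ℝ))).congr_of_eventuallyEq ?_
      filter_upwards [hK.isClosed.isOpen_compl.mem_nhds hx] with y hy
      by_cases h : y ∈ Ω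
      · simp [h, h0 y h hy]
      · simp [h]
  have hs : HasCompactSupport (Ω.indicator F) := by
    refine HasCompactSupport.intro hK ?_
    intro x hx
    by_cases h : x ∈ Ω
    · simp [h, h0 x h hx]
    · simp [h]
  have hd : (fun x => fderiv ℝ (Ω.indicator F) x v) = Ω.indicator (fun x => fderiv ℝ F x v) := by
    funext x
    by_cases h : x ∈ Ω
    · rw [Set.indicator_of_mem h]
      have : Ω.indicator F =ᶠ[𝓝 x] F := by
        filter_upwards [hΩ.mem_nhds h] with y hy
        simp [hy]
      rw [this.fderiv_eq]
    · rw [Set.indicator_of_notMem h]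
      have : Ω.indicator F =ᶠ[𝓝 x] fun _ => (0:ℝ) := by
        filter_upwards [hK.isClosed.isOpen_compl.mem_nhds (fun hx => h (hKΩ hx))] with y hy
        by_cases h : y ∈ Ω
        · simp [h, h0 y h hy]
        · simp [h]
      rw [this.fderiv_eq]
      simp
  have hi : Integrable (fun x => fderiv ℝ (Ω.indicator F) x v) := by
    apply Continuous.integrable_of_hasCompactSupport
    · exact (hG.continuous_fderiv (by norm_num)).clm_apply continuous_const
    · exact hs.fderiv_apply ℝ v
  have key := integral_mul_fderiv_eq_neg_fderiv_mul_of_integrable (μ := volume)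
    (f := fun _ : EuclideanSpace ℝ (Fin n) => (1:ℝ)) (g := Ω.indicator F) (v := v)
    (by simp) (by simpa using hi)
    (by simpa using hG.continuous.integrable_of_hasCompactSupport hs)
    (fun x _ => by fun_prop) (fun x _ => hG.differentiable (by norm_num) x)
  rw [hd] at hi
  have h1 := (integrable_indicator_iff hΩ.measurableSet).1 hi
  refine ⟨h1, ?_⟩
  rw [← integral_indicator hΩ.measurableSet, ← hd]
  simpa using key

theorem aux_div {n : ℕ} (Ω K : Set (EuclideanSpace ℝ (Fin n))) (hΩ : IsOpen Ω)
    (hK : IsCompact K) (hKΩ : K ⊆ Ω) (F : Fin n → EuclideanSpace ℝ (Fin n) → ℝ)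
    (hF : ∀ i, ∀ x ∈ Ω, ContDiffAt ℝ 1 (F i) x) (h0 : ∀ i, ∀ x ∈ Ω, x ∉ K → F i x = 0) :
    IntegrableOn (fun x => ∑ i, fderiv ℝ (F i) x (EuclideanSpace.single i 1)) Ω ∧
      ∫ x in Ω, ∑ i, fderiv ℝ (F i) x (EuclideanSpace.single i 1) = 0 := by
  have H := fun i => aux_ibp Ω K hΩ hK hKΩ (F i) (hF i) (h0 i) (EuclideanSpace.single i 1)
  refine ⟨integrable_finsetSum _ fun i _ => (H i).1, ?_⟩
  rw [integral_finsetSum _ fun i _ => (H i).1]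
  exact Finset.sum_eq_zero fun i _ => (H i).2

theorem aux_maxsq (s : ℝ) : HasDerivAt (fun s : ℝ => (max s 0) ^ 2) (2 * max s 0) s := by
  rcases lt_trichotomy s 0 with h | h | h
  · have : (fun s : ℝ => (max s 0) ^ 2) =ᶠ[𝓝 s] fun _ => 0 := by
      filter_upwards [Iio_mem_nhds h] with y hy
      simp [max_eq_right (le_of_lt (mem_Iio.1 hy))]
    rw [max_eq_right h.le, mul_zero]
    exact (hasDerivAt_const s (0:ℝ)).congr_of_eventuallyEq this
  · subst h
    have h2 : HasDerivAt (fun s : ℝ => s ^ 2) 0 0 := by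
      simpa using hasDerivAt_pow 2 (0:ℝ)
    rw [hasDerivAt_iff_isLittleO] at h2 ⊢
    refine Asymptotics.IsBigO.trans_isLittleO ?_ h2
    refine Asymptotics.IsBigO.of_bound 1 (Eventually.of_forall fun y => ?_)
    rcases le_total y 0 with hy | hy
    · simp [hy]; positivity
    · simp [hy]
  · have : (fun s : ℝ => (max s 0) ^ 2) =ᶠ[𝓝 s] fun s => s ^ 2 := by
      filter_upwards [Ioi_mem_nhds h] with y hy
      simp [max_eq_left (le_of_lt (mem_Ioi.1 hy))]
    rw [max_eq_left h.le]
    simpa using (hasDerivAt_pow 2 s).congr_of_eventuallyEq this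

theorem aux_maxsq_cd : ContDiff ℝ 1 (fun s : ℝ => (max s 0) ^ 2) := by
  rw [contDiff_one_iff_deriv]
  refine ⟨fun s => (aux_maxsq s).differentiableAt, ?_⟩
  have : deriv (fun s : ℝ => (max s 0) ^ 2) = fun s => 2 * max s 0 := by
    funext s; exact (aux_maxsq s).deriv
  rw [this]; fun_prop

/-- the cutoff ratio -/
def cutT (ε s : ℝ) : ℝ := max (s - ε) 0 / (s + ε)

theorem cutT_nonneg {ε s : ℝ} (hε : 0 < ε) (hs : 0 ≤ s) : 0 ≤ cutT ε s := by
  unfold cutT; positivity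

theorem cutT_le_one {ε s : ℝ} (hε : 0 < ε) (hs : 0 ≤ s) : cutT ε s ≤ 1 := by
  unfold cutT
  rw [div_le_one (by positivity)]
  exact max_le (by linarith) (by linarith)

theorem cutT_zero {ε s : ℝ} (h : s ≤ ε) : cutT ε s = 0 := by
  unfold cutT; rw [max_eq_right (by linarith)]; simp

theorem cutT_tendsto {s : ℝ} (hs : 0 < s) (e : ℕ → ℝ) (he : Tendsto e atTop (𝓝 0)) :
    Tendsto (fun m => cutT (e m) s) atTop (𝓝 1) := by
  have : Tendsto (fun m => cutT (e m) s) atTop (𝓝 (max (s - 0) 0 / (s + 0))) := by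
    unfold cutT
    refine Tendsto.div ?_ ?_ (by simpa using hs.ne')
    · exact (tendsto_const_nhds.sub he).max tendsto_const_nhds
    · exact tendsto_const_nhds.add he
  simpa [max_eq_left hs.le, hs.ne'] using this

/-- `h = T²`. -/
def cutH (ε s : ℝ) : ℝ := (max (s - ε) 0) ^ 2 / (s + ε) ^ 2

/-- `k = (s+ε) T²`. -/
def cutK (ε s : ℝ) : ℝ := (max (s - ε) 0) ^ 2 / (s + ε)

theorem cutH_eq (ε s : ℝ) : cutH ε s = cutT ε s ^ 2 := by
  unfold cutH cutT; rw [div_pow]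

theorem cutK_eq {ε s : ℝ} (hε : 0 < ε) (hs : 0 ≤ s) : cutK ε s = (s + ε) * cutT ε s ^ 2 := by
  unfold cutK cutT; have : s + ε ≠ 0 := by positivity
  field_simp

theorem cutH_cd {ε s : ℝ} (hε : 0 < ε) (hs : 0 ≤ s) : ContDiffAt ℝ 1 (cutH ε) s := by
  unfold cutH
  have : ContDiffAt ℝ 1 (fun s : ℝ => (max (s - ε) 0) ^ 2) s :=
    (aux_maxsq_cd.comp (contDiff_id.sub contDiff_const)).contDiffAt
  exact this.div (by fun_prop) (by positivity)

theorem cutK_cd {ε s : ℝ} (hε : 0 < ε) (hs : 0 ≤ s) : ContDiffAt ℝ 1 (cutK ε) s := by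
  unfold cutK
  have : ContDiffAt ℝ 1 (fun s : ℝ => (max (s - ε) 0) ^ 2) s :=
    (aux_maxsq_cd.comp (contDiff_id.sub contDiff_const)).contDiffAt
  exact this.div (by fun_prop) (by positivity)

theorem cutK_deriv {ε s : ℝ} (hε : 0 < ε) (hs : 0 ≤ s) :
    HasDerivAt (cutK ε) (cutT ε s * (2 - cutT ε s)) s := by
  have h1 : HasDerivAt (fun s : ℝ => (max (s - ε) 0) ^ 2) (2 * max (s - ε) 0) s := by
    simpa using (aux_maxsq (s - ε)).comp_sub_const s ε
  have h2 := h1.div ((hasDerivAt_id s).add_const ε) (by simp; positivity)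
  refine h2.congr_deriv ?_
  unfold cutT
  have : s + ε ≠ 0 := by positivity
  simp only [id]
  field_simp

theorem cutH_deriv {ε s : ℝ} (hε : 0 < ε) (hs : 0 ≤ s) :
    ∃ d, HasDerivAt (cutH ε) d s ∧ 0 ≤ d ∧ d * s ≤ 2 * cutT ε s * (1 - cutT ε s) := by
  have h1 : HasDerivAt (fun s : ℝ => (max (s - ε) 0) ^ 2) (2 * max (s - ε) 0) s := by
    simpa using (aux_maxsq (s - ε)).comp_sub_const s ε
  have h2 := h1.div (((hasDerivAt_id s).add_const ε).pow 2) (by simp; positivity)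
  have hp : 0 < s + ε := by positivity
  refine ⟨_, h2, ?_, ?_⟩
  · simp only [id]
    rcases le_total s ε with h | h
    · simp [max_eq_right (sub_nonpos.2 h)]
    · rw [max_eq_left (sub_nonneg.2 h)]
      apply div_nonneg _ (by positivity)
      simp
      nlinarith [mul_nonneg (mul_nonneg (sub_nonneg.2 h) hp.le) hε.le]
  · simp only [id]
    rcases le_total s ε with h | h
    · simp [max_eq_right (sub_nonpos.2 h), cutT]
    · unfold cutT
      rw [max_eq_left (sub_nonneg.2 h)]
      rw [show 2 * ((s - ε) / (s + ε)) * (1 - (s - ε) / (s + ε)) = 4 * ε * (s - ε) / (s+ε)^2 by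
        field_simp; ring]
      simp
      rw [show (2 * (s - ε) * (s + ε) ^ 2 - (s - ε) ^ 2 * (2 * (s + ε))) / ((s + ε) ^ 2) ^ 2 * s
        = (4 * ε * (s - ε) / (s+ε)^2) * (s / (s + ε)) by field_simp; ring]
      refine mul_le_of_le_one_right ?_ ?_
      · have := sub_nonneg.2 h; positivity
      · rw [div_le_one hp]; linarith

/-- partial derivative -/
def pd {n : ℕ} (i : Fin n) (f : EuclideanSpace ℝ (Fin n) → ℝ) (x : EuclideanSpace ℝ (Fin n)) : ℝ :=
  fderiv ℝ f x (EuclideanSpace.single i 1)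

theorem pd_mul {n : ℕ} (i : Fin n) {f g : EuclideanSpace ℝ (Fin n) → ℝ}
    {x : EuclideanSpace ℝ (Fin n)} (hf : ContDiffAt ℝ 1 f x) (hg : ContDiffAt ℝ 1 g x) :
    pd i (fun y => f y * g y) x = pd i f x * g x + f x * pd i g x := by
  unfold pd
  rw [fderiv_fun_mul (hf.differentiableAt (by norm_num)) (hg.differentiableAt (by norm_num))]
  simp; ring

theorem pd_add {n : ℕ} (i : Fin n) {f g : EuclideanSpace ℝ (Fin n) → ℝ}
    {x : EuclideanSpace ℝ (Fin n)} (hf : ContDiffAt ℝ 1 f x) (hg : ContDiffAt ℝ 1 g x) :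
    pd i (fun y => f y + g y) x = pd i f x + pd i g x := by
  unfold pd
  rw [fderiv_fun_add (hf.differentiableAt (by norm_num)) (hg.differentiableAt (by norm_num))]
  simp

theorem pd_sub {n : ℕ} (i : Fin n) {f g : EuclideanSpace ℝ (Fin n) → ℝ}
    {x : EuclideanSpace ℝ (Fin n)} (hf : ContDiffAt ℝ 1 f x) (hg : ContDiffAt ℝ 1 g x) :
    pd i (fun y => f y - g y) x = pd i f x - pd i g x := by
  unfold pd
  rw [fderiv_fun_sub (hf.differentiableAt (by norm_num)) (hg.differentiableAt (by norm_num))]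
  simp

theorem pd_comp {n : ℕ} (i : Fin n) {f : EuclideanSpace ℝ (Fin n) → ℝ} {h : ℝ → ℝ} {d : ℝ}
    {x : EuclideanSpace ℝ (Fin n)} (hf : ContDiffAt ℝ 1 f x) (hh : HasDerivAt h d (f x)) :
    pd i (fun y => h (f y)) x = d * pd i f x := by
  unfold pd
  have := hh.comp_hasFDerivAt x (hf.differentiableAt (by norm_num)).hasFDerivAt
  rw [show (fun y => h (f y)) = h ∘ f from rfl, this.fderiv]
  simp

theorem pd_cd {n : ℕ} (i : Fin n) {f : EuclideanSpace ℝ (Fin n) → ℝ}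
    {x : EuclideanSpace ℝ (Fin n)} (hf : ContDiffAt ℝ 2 f x) : ContDiffAt ℝ 1 (pd i f) x := by
  unfold pd
  exact (hf.fderiv_right (m := 1) (by norm_num)).clm_apply contDiffAt_const

theorem aux_compact {n : ℕ} (Ω : Set (EuclideanSpace ℝ (Fin n)))
    (hΩo : IsOpen Ω) (hΩb : Bornology.IsBounded Ω) (w : EuclideanSpace ℝ (Fin n) → ℝ)
    (hwc : ContinuousOn w (closure Ω)) (hwbd : ∀ x ∈ frontier Ω, w x = 0) (ε : ℝ) (hε : 0 < ε) :
    ∃ K, IsCompact K ∧ K ⊆ Ω ∧ ∀ x ∈ Ω, x ∉ K → w x ≤ ε := by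
  have hc : IsCompact (closure Ω) := hΩb.isCompact_closure
  refine ⟨closure Ω ∩ w ⁻¹' Ici ε, ?_, ?_, ?_⟩
  · exact hc.of_isClosed_subset (hwc.preimage_isClosed_of_isClosed isClosed_closure isClosed_Ici)
      inter_subset_left
  · rintro x ⟨hx, hx2⟩
    by_contra h
    have : x ∈ frontier Ω := by
      rw [hΩo.frontier_eq]; exact ⟨hx, h⟩
    have h2 := hwbd x this
    have h3 : ε ≤ w x := hx2
    linarith
  · intro x hx hxK
    by_contra h
    exact hxK ⟨subset_closure hx, (not_le.1 h).le⟩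

theorem aux_scalar {t p b C s M ε : ℝ} (ht0 : 0 ≤ t) (ht1 : t ≤ 1) (hb : |b| ≤ C)
    (hs : 0 ≤ s + ε) (hM : s + ε ≤ M) :
    t ^ 2 * p ^ 2 / 2 - (C ^ 2 + M ^ 2 * C ^ 2) ≤
      t * (2 - t) * p * (p + b) - (s + ε) * t ^ 2 * (C * |p|) := by
  have hC : 0 ≤ C := (abs_nonneg b).trans hb
  have hb2 : b ^ 2 ≤ C ^ 2 := by
    rw [← sq_abs b]; gcongr
  have h1 : p * (p + b) ≥ 3 / 4 * p ^ 2 - C ^ 2 := by nlinarith [sq_nonneg (p / 2 + b)]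
  have hr1 : t ^ 2 ≤ t * (2 - t) := by nlinarith
  have hr2 : t * (2 - t) ≤ 1 := by nlinarith [sq_nonneg (t - 1)]
  have hr0 : 0 ≤ t * (2 - t) := by nlinarith
  have h2 : t * (2 - t) * (p * (p + b)) ≥ 3 / 4 * (t ^ 2 * p ^ 2) - C ^ 2 := by
    have e1 := mul_le_mul_of_nonneg_left h1 hr0
    have e2 := mul_le_mul_of_nonneg_right hr1 (sq_nonneg p)
    have e3 := mul_le_mul_of_nonneg_right hr2 (sq_nonneg C)
    nlinarith
  have h3 : (s + ε) * (C * |p|) ≤ M * C * |p| := by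
    have : 0 ≤ C * |p| := by positivity
    nlinarith [mul_le_mul_of_nonneg_right hM this]
  have h4 : M * C * |p| ≤ p ^ 2 / 4 + M ^ 2 * C ^ 2 := by
    nlinarith [sq_nonneg (|p| / 2 - M * C), sq_abs p]
  have ht2 : t ^ 2 ≤ 1 := by nlinarith
  have h5 : t ^ 2 * ((s + ε) * (C * |p|)) ≤ t ^ 2 * p ^ 2 / 4 + M ^ 2 * C ^ 2 := by
    have e1 := mul_le_mul_of_nonneg_left (h3.trans h4) (sq_nonneg t)
    have e2 : t ^ 2 * (M ^ 2 * C ^ 2) ≤ M ^ 2 * C ^ 2 :=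
      mul_le_of_le_one_left (by positivity) ht2
    nlinarith
  nlinarith

theorem aux_energy_eps {n : ℕ} (Ω : Set (EuclideanSpace ℝ (Fin n)))
    (hΩo : IsOpen Ω) (hΩb : Bornology.IsBounded Ω) (w : EuclideanSpace ℝ (Fin n) → ℝ)
    (b : Fin n → EuclideanSpace ℝ (Fin n) → ℝ) (C M : ℝ)
    (hw2 : ∀ x ∈ Ω, ContDiffAt ℝ 2 w x)
    (hwc : ContinuousOn w (closure Ω)) (hwbd : ∀ x ∈ frontier Ω, w x = 0)
    (hw0 : ∀ x ∈ Ω, 0 ≤ w x) (hwM : ∀ x ∈ Ω, w x + 1 ≤ M)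
    (hb : ∀ i, ∀ x ∈ Ω, ContDiffAt ℝ 1 (b i) x)
    (hC : 0 ≤ C) (hbC : ∀ i, ∀ x ∈ Ω, |b i x| ≤ C)
    (heq : ∀ x ∈ Ω, |∑ i, (pd i (pd i w) x + pd i (b i) x)| ≤ C * (1 + ∑ i, |pd i w x|))
    (ε : ℝ) (hε : 0 < ε) (hε1 : ε ≤ 1) :
    ∫⁻ x in Ω, ENNReal.ofReal (cutT ε (w x) ^ 2 * ∑ i, pd i w x ^ 2) ≤
      ENNReal.ofReal (∫ x in Ω, 2 * (n * (C ^ 2 + M ^ 2 * C ^ 2) + M * C)) := by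
  obtain ⟨K, hK, hKΩ, hKw⟩ := aux_compact Ω hΩo hΩb w hwc hwbd ε hε
  have hw1 : ∀ x ∈ Ω, ContDiffAt ℝ 1 w x := fun x hx => (hw2 x hx).of_le (by norm_num)
  set F : Fin n → EuclideanSpace ℝ (Fin n) → ℝ :=
    fun i y => cutK ε (w y) * (pd i w y + b i y) with hFdef
  have hkc : ∀ x ∈ Ω, ContDiffAt ℝ 1 (fun y => cutK ε (w y)) x := fun x hx =>
    (cutK_cd hε (hw0 x hx)).comp x (hw1 x hx)
  have hpc : ∀ i, ∀ x ∈ Ω, ContDiffAt ℝ 1 (fun y => pd i w y + b i y) x := fun i x hx =>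
    (pd_cd i (hw2 x hx)).add (hb i x hx)
  obtain ⟨hI, hI0⟩ := aux_div Ω K hΩo hK hKΩ F
    (fun i x hx => (hkc x hx).mul (hpc i x hx))
    (fun i x hx hxK => by
      simp only [hFdef]
      rw [cutK_eq hε (hw0 x hx), cutT_zero (hKw x hx hxK)]; simp)
  set A : ℝ := n * (C ^ 2 + M ^ 2 * C ^ 2) + M * C with hA
  have hvol : volume Ω ≠ ⊤ := hΩb.measure_lt_top.ne
  have hIA : IntegrableOn (fun _ : EuclideanSpace ℝ (Fin n) => 2 * A) Ω :=
    integrableOn_const hvol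
  have key : ∀ x ∈ Ω, cutT ε (w x) ^ 2 * ∑ i, pd i w x ^ 2 ≤
      2 * (∑ i, fderiv ℝ (F i) x (EuclideanSpace.single i 1)) + 2 * A := by
    intro x hx
    have ht0 := cutT_nonneg hε (hw0 x hx)
    have ht1 := cutT_le_one hε (hw0 x hx)
    have hk := cutK_eq hε (hw0 x hx)
    have hse : 0 ≤ w x + ε := add_nonneg (hw0 x hx) hε.le
    have hsM : w x + ε ≤ M := by linarith [hwM x hx]
    have hd : ∀ i, fderiv ℝ (F i) x (EuclideanSpace.single i 1) =
        cutT ε (w x) * (2 - cutT ε (w x)) * pd i w x * (pd i w x + b i x) +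
        cutK ε (w x) * (pd i (pd i w) x + pd i (b i) x) := by
      intro i
      change pd i (fun y => cutK ε (w y) * (pd i w y + b i y)) x = _
      rw [pd_mul i (hkc x hx) (hpc i x hx), pd_comp i (hw1 x hx) (cutK_deriv hε (hw0 x hx)),
        pd_add i (pd_cd i (hw2 x hx)) (hb i x hx)]
    have hsc := Finset.sum_le_sum (s := Finset.univ) fun i _ =>
      aux_scalar (p := pd i w x) ht0 ht1 (hbC i x hx) hse hsM
    simp only [Finset.sum_sub_distrib, Finset.sum_const, Finset.card_univ, Fintype.card_fin,
      nsmul_eq_mul, ← Finset.mul_sum, ← Finset.sum_div] at hsc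
    simp only [hd, Finset.sum_add_distrib, ← Finset.mul_sum]
    have hk0 : 0 ≤ cutK ε (w x) := by rw [hk]; positivity
    have hkM : cutK ε (w x) ≤ M := by
      rw [hk]
      calc _ ≤ (w x + ε) * 1 := by gcongr; nlinarith
        _ ≤ M := by linarith
    have h1 := mul_le_mul_of_nonneg_left (neg_le_of_abs_le (heq x hx)) hk0
    have h2 := mul_le_mul_of_nonneg_right hkM hC
    simp only [Finset.sum_add_distrib] at h1
    rw [← hk] at hsc
    nlinarith
  calc _ ≤ ∫⁻ x in Ω, ENNReal.ofReal
        (2 * (∑ i, fderiv ℝ (F i) x (EuclideanSpace.single i 1)) + 2 * A) := by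
        refine setLIntegral_mono' hΩo.measurableSet fun x hx => ENNReal.ofReal_le_ofReal (key x hx)
    _ = ENNReal.ofReal (∫ x in Ω,
        (2 * (∑ i, fderiv ℝ (F i) x (EuclideanSpace.single i 1)) + 2 * A)) := by
        rw [ofReal_integral_eq_lintegral_ofReal]
        · exact (hI.const_mul 2).add hIA
        · refine (ae_restrict_iff' hΩo.measurableSet).2 (Eventually.of_forall fun x hx => ?_)
          refine le_trans ?_ (key x hx)
          exact mul_nonneg (sq_nonneg _) (Finset.sum_nonneg fun i _ => sq_nonneg _)
    _ = _ := by
        rw [integral_add (hI.const_mul 2) hIA, integral_const_mul, hI0]; simp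

theorem aux_energy {n : ℕ} (Ω : Set (EuclideanSpace ℝ (Fin n)))
    (hΩo : IsOpen Ω) (hΩb : Bornology.IsBounded Ω) (w : EuclideanSpace ℝ (Fin n) → ℝ)
    (b : Fin n → EuclideanSpace ℝ (Fin n) → ℝ) (C M : ℝ)
    (hw2 : ∀ x ∈ Ω, ContDiffAt ℝ 2 w x)
    (hwc : ContinuousOn w (closure Ω)) (hwbd : ∀ x ∈ frontier Ω, w x = 0)
    (hw0 : ∀ x ∈ Ω, 0 ≤ w x) (hwM : ∀ x ∈ Ω, w x + 1 ≤ M)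
    (hb : ∀ i, ∀ x ∈ Ω, ContDiffAt ℝ 1 (b i) x)
    (hC : 0 ≤ C) (hbC : ∀ i, ∀ x ∈ Ω, |b i x| ≤ C)
    (heq : ∀ x ∈ Ω, |∑ i, (pd i (pd i w) x + pd i (b i) x)| ≤ C * (1 + ∑ i, |pd i w x|)) :
    IntegrableOn (fun x => ∑ i, pd i w x ^ 2) Ω := by
  have H := fun m : ℕ => aux_energy_eps Ω hΩo hΩb w b C M hw2 hwc hwbd hw0 hwM hb hC hbC heq
    (1 / ((m : ℝ) + 1)) (by positivity)
    (by rw [div_le_one (by positivity)]; linarith [Nat.cast_nonneg (α := ℝ) m])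
  have hpcont : ∀ i, ContinuousOn (pd i w) Ω := fun i x hx =>
    (pd_cd i (hw2 x hx)).continuousAt.continuousWithinAt
  have hwcont : ContinuousOn w Ω := hwc.mono subset_closure
  have hScont : ContinuousOn (fun x => ∑ i, pd i w x ^ 2) Ω :=
    continuousOn_finsetSum _ fun i _ => (hpcont i).pow 2
  have hS0 : ∀ x, 0 ≤ ∑ i, pd i w x ^ 2 := fun x => Finset.sum_nonneg fun i _ => sq_nonneg _
  refine ⟨hScont.aestronglyMeasurable hΩo.measurableSet, ?_⟩
  rw [hasFiniteIntegral_iff_ofReal (Eventually.of_forall hS0)]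
  have hmeas : ∀ m : ℕ, AEMeasurable (fun x => ENNReal.ofReal
      (cutT (1 / ((m : ℝ) + 1)) (w x) ^ 2 * ∑ i, pd i w x ^ 2)) (volume.restrict Ω) := by
    intro m
    refine ENNReal.measurable_ofReal.comp_aemeasurable ?_
    refine ContinuousOn.aemeasurable ?_ hΩo.measurableSet
    refine ContinuousOn.mul (ContinuousOn.pow ?_ 2) hScont
    unfold cutT
    refine ContinuousOn.div (by fun_prop) (by fun_prop) ?_
    intro x hx
    have := hw0 x hx
    positivity
  have hlim : ∀ x ∈ Ω, Tendsto (fun m : ℕ => ENNReal.ofReal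
      (cutT (1 / ((m : ℝ) + 1)) (w x) ^ 2 * ∑ i, pd i w x ^ 2)) atTop
      (𝓝 (ENNReal.ofReal (∑ i, pd i w x ^ 2))) := by
    intro x hx
    refine (ENNReal.continuous_ofReal.tendsto _).comp ?_
    rcases (hw0 x hx).eq_or_lt with h | h
    · have hmin : IsLocalMin w x := by
        filter_upwards [hΩo.mem_nhds hx] with y hy
        rw [← h]; exact hw0 y hy
      have : ∀ i, pd i w x = 0 := fun i => by
        unfold pd; rw [hmin.fderiv_eq_zero]; simp
      simp [this]
    · have := cutT_tendsto h (fun m : ℕ => 1 / ((m : ℝ) + 1)) tendsto_one_div_add_atTop_nhds_zero_nat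
      simpa using (this.pow 2).mul_const (∑ i, pd i w x ^ 2)
  refine lt_of_le_of_lt ?_ (ENNReal.ofReal_lt_top (r := ∫ x in Ω,
    2 * (n * (C ^ 2 + M ^ 2 * C ^ 2) + M * C)))
  calc _ = ∫⁻ x in Ω, liminf (fun m : ℕ => ENNReal.ofReal
      (cutT (1 / ((m : ℝ) + 1)) (w x) ^ 2 * ∑ i, pd i w x ^ 2)) atTop := by
        refine setLIntegral_congr_fun hΩo.measurableSet fun x hx => ?_
        exact (hlim x hx).liminf_eq.symm
    _ ≤ _ := lintegral_liminf_le' hmeas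
    _ ≤ _ := by
        refine liminf_le_of_le (by isBoundedDefault) fun b hb => ?_
        obtain ⟨m, hm⟩ := hb.exists
        exact hm.trans (H m)

theorem aux_inner {n : ℕ} (φ : EuclideanSpace ℝ (Fin n) → ℝ) (v x : EuclideanSpace ℝ (Fin n)) :
    ⟪v, gradient φ x⟫ = ∑ i, v i * pd i φ x := by
  have h1 : ⟪v, gradient φ x⟫ = fderiv ℝ φ x v := by
    rw [real_inner_comm]; unfold gradient; exact InnerProductSpace.toDual_symm_apply
  have h2 : v = ∑ i, v i • EuclideanSpace.single i (1:ℝ) := by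
    have := (EuclideanSpace.basisFun (Fin n) ℝ).sum_repr v
    simpa using this.symm
  rw [h1]
  conv_lhs => rw [h2]
  simp [pd]

theorem aux_scalar2 {d p q u φ η D C : ℝ} (hd : 0 ≤ d) (hφ : 0 ≤ φ) (hη : 0 ≤ η)
    (hdη : d * η ≤ D) (hC : φ * |u| ≤ C) :
    -(D * (|p| * (|q| + C))) ≤ d * p * (φ * p - η * q + φ * (η * u)) := by
  have h1 : d * p * (φ * p - η * q + φ * (η * u)) =
      d * φ * p ^ 2 - (d * η) * (p * (q - φ * u)) := by ring
  have h2 : p * (q - φ * u) ≤ |p| * (|q| + C) := by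
    calc p * (q - φ * u) ≤ |p * (q - φ * u)| := le_abs_self _
      _ = |p| * |q - φ * u| := abs_mul _ _
      _ ≤ |p| * (|q| + |φ * u|) := by gcongr; exact abs_sub _ _
      _ ≤ |p| * (|q| + C) := by
        rw [abs_mul, abs_of_nonneg hφ]; gcongr
  have hC0 : 0 ≤ C := le_trans (by positivity) hC
  have h3 : (d * η) * (p * (q - φ * u)) ≤ D * (|p| * (|q| + C)) :=
    (mul_le_mul_of_nonneg_left h2 (by positivity)).trans
      (mul_le_mul_of_nonneg_right hdη (by positivity))
  have h4 : 0 ≤ d * φ * p ^ 2 := by positivity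
  linarith

theorem aux_tangent (g : ℝ → ℝ) (hg : ContDiff ℝ 2 g) (hgconv : ConvexOn ℝ (Ici 0) g)
    {s : ℝ} (hs : 0 ≤ s) : g 0 + deriv g 0 * s ≤ g s := by
  rcases hs.eq_or_lt with h | h
  · simp [← h]
  · have := hgconv.deriv_le_slope (x := 0) (y := s) (by simp) hs h
      (hg.differentiable (by norm_num) 0)
    rw [slope_def_field, sub_zero, le_div_iff₀ h] at this
    linarith

theorem aux_main_eps {n : ℕ} (Ω : Set (EuclideanSpace ℝ (Fin n)))
    (hΩo : IsOpen Ω) (hΩb : Bornology.IsBounded Ω)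
    (u : EuclideanSpace ℝ (Fin n) → EuclideanSpace ℝ (Fin n))
    (hu : ∀ i, ∀ x ∈ Ω, ContDiffAt ℝ 1 (fun y => u y i) x)
    (η φ : EuclideanSpace ℝ (Fin n) → ℝ) (μ C c : ℝ) (f : EuclideanSpace ℝ (Fin n) → ℝ)
    (hη2 : ∀ x ∈ Ω, ContDiffAt ℝ 2 η x)
    (hηc : ContinuousOn η (closure Ω)) (hηbd : ∀ x ∈ frontier Ω, η x = 0)
    (hη0 : ∀ x ∈ Ω, 0 ≤ η x)
    (hφ2 : ∀ x ∈ Ω, ContDiffAt ℝ 2 φ x) (hφ0 : ∀ x ∈ Ω, 0 ≤ φ x)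
    (hC : ∀ i, ∀ x ∈ Ω, φ x * |u x i| ≤ C)
    (hηeq : ∀ x ∈ Ω, ∑ i, (pd i (pd i η) x + pd i (fun y => η y * u y i) x) = - (μ * η x))
    (hφeq : ∀ x ∈ Ω, ∑ i, (u x i * pd i φ x - pd i (pd i φ) x) = f x)
    (hf : ∀ x ∈ Ω, c + μ * φ x ≤ f x)
    (ε : ℝ) (hε : 0 < ε)
    (hR : IntegrableOn (fun x => cutT ε (η x) ^ 2 * (η x * c) -
      2 * cutT ε (η x) * (1 - cutT ε (η x)) * ∑ i, |pd i η x| * (|pd i φ x| + C)) Ω) :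
    ∫ x in Ω, (cutT ε (η x) ^ 2 * (η x * c) -
      2 * cutT ε (η x) * (1 - cutT ε (η x)) * ∑ i, |pd i η x| * (|pd i φ x| + C)) ≤ 0 := by
  obtain ⟨K, hK, hKΩ, hKw⟩ := aux_compact Ω hΩo hΩb η hηc hηbd ε hε
  have hη1 : ∀ x ∈ Ω, ContDiffAt ℝ 1 η x := fun x hx => (hη2 x hx).of_le (by norm_num)
  have hφ1 : ∀ x ∈ Ω, ContDiffAt ℝ 1 φ x := fun x hx => (hφ2 x hx).of_le (by norm_num)
  set F : Fin n → EuclideanSpace ℝ (Fin n) → ℝ :=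
    fun i y => cutH ε (η y) * (φ y * pd i η y - η y * pd i φ y + φ y * (η y * u y i)) with hFdef
  have hkc : ∀ x ∈ Ω, ContDiffAt ℝ 1 (fun y => cutH ε (η y)) x := fun x hx =>
    (cutH_cd hε (hη0 x hx)).comp x (hη1 x hx)
  have h1 : ∀ i, ∀ x ∈ Ω, ContDiffAt ℝ 1 (fun y => φ y * pd i η y) x := fun i x hx =>
    (hφ1 x hx).mul (pd_cd i (hη2 x hx))
  have h2 : ∀ i, ∀ x ∈ Ω, ContDiffAt ℝ 1 (fun y => η y * pd i φ y) x := fun i x hx =>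
    (hη1 x hx).mul (pd_cd i (hφ2 x hx))
  have h3 : ∀ i, ∀ x ∈ Ω, ContDiffAt ℝ 1 (fun y => η y * u y i) x := fun i x hx =>
    (hη1 x hx).mul (hu i x hx)
  have h4 : ∀ i, ∀ x ∈ Ω, ContDiffAt ℝ 1 (fun y => φ y * (η y * u y i)) x := fun i x hx =>
    (hφ1 x hx).mul (h3 i x hx)
  have hV : ∀ i, ∀ x ∈ Ω, ContDiffAt ℝ 1
      (fun y => φ y * pd i η y - η y * pd i φ y + φ y * (η y * u y i)) x := fun i x hx =>
    ((h1 i x hx).sub (h2 i x hx)).add (h4 i x hx)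
  obtain ⟨hI, hI0⟩ := aux_div Ω K hΩo hK hKΩ F
    (fun i x hx => (hkc x hx).mul (hV i x hx))
    (fun i x hx hxK => by
      simp only [hFdef]
      rw [cutH_eq, cutT_zero (hKw x hx hxK)]; simp)
  rw [← hI0]
  refine setIntegral_mono_on hR hI hΩo.measurableSet fun x hx => ?_
  obtain ⟨d, hd, hd0, hdT⟩ := cutH_deriv hε (hη0 x hx)
  have hD : ∀ i, fderiv ℝ (F i) x (EuclideanSpace.single i 1) =
      d * pd i η x * (φ x * pd i η x - η x * pd i φ x + φ x * (η x * u x i)) +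
      cutH ε (η x) * (φ x * (pd i (pd i η) x + pd i (fun y => η y * u y i) x) +
        η x * (u x i * pd i φ x - pd i (pd i φ) x)) := by
    intro i
    change pd i (fun y => cutH ε (η y) *
      (φ y * pd i η y - η y * pd i φ y + φ y * (η y * u y i))) x = _
    rw [pd_mul i (hkc x hx) (hV i x hx), pd_comp i (hη1 x hx) hd,
      pd_add i ((h1 i x hx).sub (h2 i x hx)) (h4 i x hx), pd_sub i (h1 i x hx) (h2 i x hx),
      pd_mul i (hφ1 x hx) (pd_cd i (hη2 x hx)), pd_mul i (hη1 x hx) (pd_cd i (hφ2 x hx)),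
      pd_mul i (hφ1 x hx) (h3 i x hx)]
    ring
  have hsc := Finset.sum_le_sum (s := Finset.univ) fun i _ =>
    aux_scalar2 (p := pd i η x) (q := pd i φ x) hd0 (hφ0 x hx) (hη0 x hx) hdT (hC i x hx)
  rw [Finset.sum_neg_distrib, ← Finset.mul_sum] at hsc
  simp only [hD]
  rw [Finset.sum_add_distrib, ← Finset.mul_sum, Finset.sum_add_distrib, ← Finset.mul_sum,
    ← Finset.mul_sum, hηeq x hx, hφeq x hx, cutH_eq]
  have h5 : cutT ε (η x) ^ 2 * (η x * c) ≤
      cutT ε (η x) ^ 2 * (φ x * -(μ * η x) + η x * f x) := by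
    refine mul_le_mul_of_nonneg_left ?_ (sq_nonneg _)
    nlinarith [mul_le_mul_of_nonneg_left (hf x hx) (hη0 x hx)]
  linarith

theorem aux_main {n : ℕ} (Ω : Set (EuclideanSpace ℝ (Fin n)))
    (hΩo : IsOpen Ω) (hΩb : Bornology.IsBounded Ω) (hne : Ω.Nonempty)
    (u : EuclideanSpace ℝ (Fin n) → EuclideanSpace ℝ (Fin n))
    (hu : ∀ i, ∀ x ∈ Ω, ContDiffAt ℝ 1 (fun y => u y i) x)
    (η φ : EuclideanSpace ℝ (Fin n) → ℝ) (μ C c M : ℝ) (f : EuclideanSpace ℝ (Fin n) → ℝ)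
    (hη2 : ∀ x ∈ Ω, ContDiffAt ℝ 2 η x)
    (hηc : ContinuousOn η (closure Ω)) (hηbd : ∀ x ∈ frontier Ω, η x = 0)
    (hη0 : ∀ x ∈ Ω, 0 < η x) (hηM : ∀ x ∈ Ω, η x ≤ M)
    (hφ2 : ∀ x ∈ Ω, ContDiffAt ℝ 2 φ x) (hφ0 : ∀ x ∈ Ω, 0 ≤ φ x)
    (hC0 : 0 ≤ C) (hC : ∀ i, ∀ x ∈ Ω, φ x * |u x i| ≤ C)
    (hηeq : ∀ x ∈ Ω, ∑ i, (pd i (pd i η) x + pd i (fun y => η y * u y i) x) = - (μ * η x))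
    (hφeq : ∀ x ∈ Ω, ∑ i, (u x i * pd i φ x - pd i (pd i φ) x) = f x)
    (hc : 0 < c) (hf : ∀ x ∈ Ω, c + μ * φ x ≤ f x)
    (hEη : IntegrableOn (fun x => ∑ i, pd i η x ^ 2) Ω)
    (hEφ : IntegrableOn (fun x => ∑ i, pd i φ x ^ 2) Ω) : False := by
  have hvol : volume Ω ≠ ⊤ := hΩb.measure_lt_top.ne
  have hηcont : ContinuousOn η Ω := hηc.mono subset_closure
  have hpη : ∀ i, ContinuousOn (pd i η) Ω := fun i x hx =>
    (pd_cd i (hη2 x hx)).continuousAt.continuousWithinAt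
  have hpφ : ∀ i, ContinuousOn (pd i φ) Ω := fun i x hx =>
    (pd_cd i (hφ2 x hx)).continuousAt.continuousWithinAt
  have hDc : ContinuousOn (fun x => ∑ i, |pd i η x| * (|pd i φ x| + C)) Ω :=
    continuousOn_finsetSum _ fun i _ => (hpη i).abs.mul ((hpφ i).abs.add continuousOn_const)
  have hD0 : ∀ x, 0 ≤ ∑ i, |pd i η x| * (|pd i φ x| + C) := fun x =>
    Finset.sum_nonneg fun i _ => by positivity
  have hDi : IntegrableOn (fun x => ∑ i, |pd i η x| * (|pd i φ x| + C)) Ω := by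
    have hb : IntegrableOn (fun x => (∑ i, pd i η x ^ 2) + (∑ i, pd i φ x ^ 2) + n * C ^ 2) Ω :=
      (hEη.add hEφ).add (integrableOn_const hvol)
    refine Integrable.mono' hb (hDc.aestronglyMeasurable hΩo.measurableSet)
      (Eventually.of_forall fun x => ?_)
    rw [Real.norm_of_nonneg (hD0 x)]
    have : (n : ℝ) * C ^ 2 = ∑ _i : Fin n, C ^ 2 := by simp
    rw [this, ← Finset.sum_add_distrib, ← Finset.sum_add_distrib]
    refine Finset.sum_le_sum fun i _ => ?_
    have e1 := sq_abs (pd i η x)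
    have e2 := sq_abs (pd i φ x)
    nlinarith [sq_nonneg (|pd i η x| - |pd i φ x|), sq_nonneg (|pd i η x| - C),
      sq_nonneg (pd i φ x), sq_nonneg C]
  have hηi : IntegrableOn (fun x => η x * c) Ω := by
    refine Integrable.mono' (g := fun _ => M * c) (integrableOn_const hvol)
      ((hηcont.mul continuousOn_const).aestronglyMeasurable hΩo.measurableSet) ?_
    refine (ae_restrict_iff' hΩo.measurableSet).2 (Eventually.of_forall fun x hx => ?_)
    rw [Real.norm_of_nonneg (mul_pos (hη0 x hx) hc).le]
    exact mul_le_mul_of_nonneg_right (hηM x hx) hc.le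
  set R : ℕ → EuclideanSpace ℝ (Fin n) → ℝ := fun m x =>
    cutT (1 / ((m : ℝ) + 1)) (η x) ^ 2 * (η x * c) -
      2 * cutT (1 / ((m : ℝ) + 1)) (η x) * (1 - cutT (1 / ((m : ℝ) + 1)) (η x)) *
        ∑ i, |pd i η x| * (|pd i φ x| + C) with hRdef
  have hbound : Integrable (fun x => η x * c + 2 * ∑ i, |pd i η x| * (|pd i φ x| + C))
      (volume.restrict Ω) := hηi.add (hDi.const_mul 2)
  have hRm : ∀ m, AEStronglyMeasurable (R m) (volume.restrict Ω) := by
    intro m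
    refine ContinuousOn.aestronglyMeasurable ?_ hΩo.measurableSet
    have hT : ContinuousOn (fun x => cutT (1 / ((m : ℝ) + 1)) (η x)) Ω := by
      unfold cutT
      refine ContinuousOn.div (by fun_prop) (by fun_prop) ?_
      intro x hx
      have := hη0 x hx
      positivity
    exact ((hT.pow 2).mul (hηcont.mul continuousOn_const)).sub
      (((continuousOn_const.mul hT).mul (continuousOn_const.sub hT)).mul hDc)
  have hRb : ∀ m, ∀ᵐ x ∂(volume.restrict Ω), ‖R m x‖ ≤
      η x * c + 2 * ∑ i, |pd i η x| * (|pd i φ x| + C) := by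
    intro m
    refine (ae_restrict_iff' hΩo.measurableSet).2 (Eventually.of_forall fun x hx => ?_)
    have hε : (0:ℝ) < 1 / ((m : ℝ) + 1) := by positivity
    have ht0 := cutT_nonneg hε (hη0 x hx).le
    have ht1 := cutT_le_one hε (hη0 x hx).le
    simp only [hRdef]
    set t := cutT (1 / ((m : ℝ) + 1)) (η x)
    have hq := (mul_pos (hη0 x hx) hc).le
    have hS := hD0 x
    refine (norm_sub_le _ _).trans (add_le_add ?_ ?_)
    · rw [Real.norm_of_nonneg (by positivity)]
      exact mul_le_of_le_one_left hq (by nlinarith)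
    · have : 0 ≤ 1 - t := by linarith
      rw [Real.norm_of_nonneg (by positivity)]
      exact mul_le_mul_of_nonneg_right (by nlinarith) hS
  have hlim : ∀ᵐ x ∂(volume.restrict Ω), Tendsto (fun m => R m x) atTop (𝓝 (η x * c)) := by
    refine (ae_restrict_iff' hΩo.measurableSet).2 (Eventually.of_forall fun x hx => ?_)
    have hT := cutT_tendsto (hη0 x hx) (fun m : ℕ => 1 / ((m : ℝ) + 1))
      tendsto_one_div_add_atTop_nhds_zero_nat
    have := ((hT.pow 2).mul_const (η x * c)).sub
      (((hT.const_mul 2).mul (hT.const_sub 1)).mul_const (∑ i, |pd i η x| * (|pd i φ x| + C)))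
    simpa [hRdef] using this
  have hconv := tendsto_integral_of_dominated_convergence _ hRm hbound hRb hlim
  have hle : ∫ x in Ω, η x * c ≤ 0 := by
    refine le_of_tendsto' hconv fun m => ?_
    exact aux_main_eps Ω hΩo hΩb u hu η φ μ C c f hη2 hηc hηbd (fun x hx => (hη0 x hx).le) hφ2 hφ0
      hC hηeq hφeq hf _ (by positivity) (hbound.mono' (hRm m) (hRb m))
  have hpos : 0 < ∫ x in Ω, η x * c := by
    rw [setIntegral_pos_iff_support_of_nonneg_ae _ hηi]
    · refine lt_of_lt_of_le (hΩo.measure_pos volume hne) (measure_mono fun x hx => ⟨?_, hx⟩)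
      exact (mul_pos (hη0 x hx) hc).ne'
    · refine (ae_restrict_iff' hΩo.measurableSet).2 (Eventually.of_forall fun x hx => ?_)
      exact (mul_pos (hη0 x hx) hc).le
  linarith

/-- If the adjoint eigenvalue problem
`-Δη - div(u η) = μ η` admits a positive principal eigenfunction `η` with eigenvalue
`μ > 0`, then for every `λ > μ / g'(0)` there is no nonnegative classical solution of
the explosion problem at parameter `λ`. -/
theorem no_solution_above_adjoint_eigenvalue {n : ℕ} (Ω : Set (EuclideanSpace ℝ (Fin n)))
    (hΩo : IsOpen Ω) (hΩc : IsConnected Ω) (hΩb : Bornology.IsBounded Ω)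
    (u : EuclideanSpace ℝ (Fin n) → EuclideanSpace ℝ (Fin n))
    (hu : ContDiffOn ℝ 1 u (closure Ω))
    (g : ℝ → ℝ) (hg : ContDiff ℝ 2 g) (hg0 : 0 < g 0) (hg0' : 0 < deriv g 0)
    (hgmono : StrictMonoOn g (Ici 0)) (hgconv : ConvexOn ℝ (Ici 0) g)
    (μ : ℝ) (hμ : 0 < μ) (η : EuclideanSpace ℝ (Fin n) → ℝ)
    (hηreg : ∀ x ∈ Ω, ContDiffAt ℝ 2 η x)
    (hηcont : ContinuousOn η (closure Ω))
    (hηpos : ∀ x ∈ Ω, 0 < η x)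
    (hηbd : ∀ x ∈ frontier Ω, η x = 0)
    (hηeq : ∀ x ∈ Ω, -lapl η x - dvg (fun y => η y • u y) x = μ * η x) :
    ∀ lam : ℝ, μ / deriv g 0 < lam → ¬ ∃ φ, IsNonnegSol Ω u g lam φ := by
  rintro lam hlam ⟨φ, ⟨hφ2, hφc, hφeq, hφbd⟩, hφ0⟩
  have hlam0 : 0 < lam := lt_trans (div_pos hμ hg0') hlam
  have hlam' : μ ≤ lam * deriv g 0 := ((div_lt_iff₀ hg0').1 hlam).le
  have hcpt : IsCompact (closure Ω) := hΩb.isCompact_closure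
  obtain ⟨Cu, hCu⟩ := hcpt.exists_bound_of_continuousOn hu.continuousOn
  obtain ⟨Mη, hMη⟩ := hcpt.exists_bound_of_continuousOn hηcont
  obtain ⟨Mφ, hMφ⟩ := hcpt.exists_bound_of_continuousOn hφc
  obtain ⟨Cg, hCg⟩ := hcpt.exists_bound_of_continuousOn
    (hg.continuous.comp_continuousOn hφc)
  obtain ⟨x0, hx0⟩ := hΩc.nonempty
  have hcl : Ω ⊆ closure Ω := subset_closure
  have hCu0 : 0 ≤ Cu := (norm_nonneg _).trans (hCu x0 (hcl hx0))
  have hMη0 : 0 ≤ Mη := (norm_nonneg _).trans (hMη x0 (hcl hx0))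
  have hMφ0 : 0 ≤ Mφ := (norm_nonneg _).trans (hMφ x0 (hcl hx0))
  have hCg0 : 0 ≤ Cg := (norm_nonneg _).trans (hCg x0 (hcl hx0))
  have hui : ∀ i, ∀ x ∈ Ω, |u x i| ≤ Cu := fun i x hx =>
    (PiLp.norm_apply_le (u x) i).trans (hCu x (hcl hx))
  have hηM : ∀ x ∈ Ω, η x ≤ Mη := fun x hx => (le_abs_self _).trans (hMη x (hcl hx))
  have hφM : ∀ x ∈ Ω, φ x ≤ Mφ := fun x hx => (le_abs_self _).trans (hMφ x (hcl hx))
  have huc : ∀ i, ∀ x ∈ Ω, ContDiffAt ℝ 1 (fun y => u y i) x := by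
    intro i x hx
    have h1 : ContDiffAt ℝ 1 u x :=
      hu.contDiffAt (mem_of_superset (hΩo.mem_nhds hx) hcl)
    exact (contDiffAt_piLp 2).1 h1 i
  have hηeq' : ∀ x ∈ Ω, ∑ i, (pd i (pd i η) x + pd i (fun y => η y * u y i) x) = - (μ * η x) := by
    intro x hx
    rw [← hηeq x hx, Finset.sum_add_distrib]
    have e1 : lapl η x = ∑ i, pd i (pd i η) x := rfl
    have e2 : dvg (fun y => η y • u y) x = ∑ i, pd i (fun y => η y * u y i) x := rfl
    rw [e1, e2]; ring
  have hφeq' : ∀ x ∈ Ω, ∑ i, (u x i * pd i φ x - pd i (pd i φ) x) = lam * g (φ x) := by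
    intro x hx
    rw [← hφeq x hx, Finset.sum_sub_distrib, aux_inner]
    have e1 : lapl φ x = ∑ i, pd i (pd i φ) x := rfl
    rw [e1]; ring
  have hEη : IntegrableOn (fun x => ∑ i, pd i η x ^ 2) Ω := by
    refine aux_energy Ω hΩo hΩb η (fun i y => η y * u y i) (Mη * Cu + μ * Mη) (Mη + 1)
      hηreg hηcont hηbd (fun x hx => (hηpos x hx).le) (fun x hx => by linarith [hηM x hx])
      (fun i x hx => ((hηreg x hx).of_le (by norm_num)).mul (huc i x hx)) (by positivity) ?_ ?_
    · intro i x hx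
      rw [abs_mul, abs_of_pos (hηpos x hx)]
      have := mul_le_mul (hηM x hx) (hui i x hx) (abs_nonneg _) hMη0
      have : 0 ≤ μ * Mη := by positivity
      linarith
    · intro x hx
      rw [hηeq' x hx, abs_neg, abs_of_pos (mul_pos hμ (hηpos x hx))]
      have h1 := mul_le_mul_of_nonneg_left (hηM x hx) hμ.le
      have h2 : 0 ≤ ∑ i, |pd i η x| := Finset.sum_nonneg fun i _ => abs_nonneg _
      have h3 : 0 ≤ Mη * Cu := by positivity
      have h4 : 0 ≤ μ * Mη := by positivity
      nlinarith [mul_nonneg h3 h2, mul_nonneg h4 h2]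
  have hEφ : IntegrableOn (fun x => ∑ i, pd i φ x ^ 2) Ω := by
    refine aux_energy Ω hΩo hΩb φ (fun i y => 0) (Cu + lam * Cg) (Mφ + 1)
      hφ2 hφc hφbd hφ0 (fun x hx => by linarith [hφM x hx])
      (fun i x hx => contDiffAt_const) (by positivity) (fun i x hx => by simp; positivity) ?_
    intro x hx
    have e0 : ∀ i : Fin n, pd i (fun _ => (0:ℝ)) x = 0 := fun i => by simp [pd]
    have h0 := hφeq' x hx
    rw [Finset.sum_sub_distrib] at h0
    simp only [e0, add_zero]
    rw [show ∑ i, pd i (pd i φ) x = ∑ i, u x i * pd i φ x - lam * g (φ x) by linarith]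
    have h2 : 0 ≤ ∑ i, |pd i φ x| := Finset.sum_nonneg fun i _ => abs_nonneg _
    have h3 : |∑ i, u x i * pd i φ x| ≤ Cu * ∑ i, |pd i φ x| := by
      refine (Finset.abs_sum_le_sum_abs _ _).trans ?_
      rw [Finset.mul_sum]
      refine Finset.sum_le_sum fun i _ => ?_
      rw [abs_mul]
      exact mul_le_mul_of_nonneg_right (hui i x hx) (abs_nonneg _)
    have h4 : |lam * g (φ x)| ≤ lam * Cg := by
      rw [abs_mul, abs_of_pos hlam0]
      exact mul_le_mul_of_nonneg_left (hCg x (hcl hx)) hlam0.le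
    have h5 : 0 ≤ lam * Cg := by positivity
    refine (abs_sub _ _).trans ?_
    nlinarith [mul_nonneg h5 h2]
  refine aux_main Ω hΩo hΩb ⟨x0, hx0⟩ u huc η φ μ (Mφ * Cu) (lam * g 0) Mη
    (fun x => lam * g (φ x)) hηreg hηcont hηbd hηpos hηM hφ2 hφ0 (by positivity) ?_ hηeq' hφeq'
    (by positivity) ?_ hEη hEφ
  · intro i x hx
    exact mul_le_mul (hφM x hx) (hui i x hx) (abs_nonneg _) hMφ0
  · intro x hx
    have h1 := mul_le_mul_of_nonneg_left (aux_tangent g hg hgconv (hφ0 x hx)) hlam0.le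
    have h2 := mul_le_mul_of_nonneg_right hlam' (hφ0 x hx)
    nlinarith
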